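/- Let X be a connected metric space with a continuous, locally convex median μ, let f : {0,1}ʳ → X be a median embedding of the r-cube, and let W be a wall in X strongly separating f(0,…,0) and f(1,0,…,0). Then there exists a median embedding g : {0,1}ʳ → X such that g(t) = f(t) for every t ∈ {0} × {0,1}^{r−1}, and g(t) ∈ L(W) = closure(H⁺(W)) ∩ closure(H⁻(W)) for every t ∈ {1} × {0,1}^{r−1}. -/

import Mathlib

/-- A median on a set `X` (the median algebra axioms). -/
def IsMedianAlgebra {X : Type*} (m : X → X → X → X) : Prop :=
  (∀ a b c, m a b c = m b a c) ∧
  (∀ a b c, m a b c = m b c a) ∧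
  (∀ a b, m a a b = a) ∧
  (∀ a b c d e, m a b (m c d e) = m (m a b c) (m a b d) e)
/-- The interval `I(a, b) = {c | μ(a,b,c) = c}`. -/
def mInterval {X : Type*} (m : X → X → X → X) (a b : X) : Set X := {c | m a b c = c}
/-- A subset `C` is convex if `I(a,b) ⊆ C` for all `a, b ∈ C`. -/
def MConvex {X : Type*} (m : X → X → X → X) (C : Set X) : Prop :=
  ∀ a ∈ C, ∀ b ∈ C, mInterval m a b ⊆ C
/-- A wall: a pair of non-empty convex disjoint subsets covering `X`. -/
def IsWall {X : Type*} (m : X → X → X → X) (Hp Hm : Set X) : Prop :=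
  Hp.Nonempty ∧ Hm.Nonempty ∧ MConvex m Hp ∧ MConvex m Hm ∧
  Disjoint Hp Hm ∧ Hp ∪ Hm = Set.univ
/-- The coordinatewise median on the cube `{0,1}ⁿ`. -/
def bmed {n : ℕ} (x y z : Fin n → Bool) : Fin n → Bool :=
  fun i => (x i && y i) || (y i && z i) || (x i && z i)

/-!
Fix a point `c` in `closure Hp ∩ closure Hm`; one exists by connectedness. The new cube replaces
each vertex `f t` by the median of `c` and the edge of the cube from `f (update t i false)` to
`f t`. This fixes the bottom face, where the edge is degenerate. On the top face that edge crosses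
the wall, since parallel edges of a cube cross the same walls, so convexity of both closures puts
the median in both.

The operation `p ⊓ q = m p q c` is a meet semilattice, and `m` distributes over it in each variable,
so the median of three new vertices is a meet of eight vertices of the old cube. They all lie on
the edge in direction `i` through the median of the three labels, and their meet is the new vertex
there.
-/

open Function

section Cube

variable {r : ℕ} (x y z : Fin r → Bool) (i : Fin r)

theorem bmed_update (a b c : Bool) :
    bmed (update x i a) (update y i b) (update z i c) =
      update (bmed x y z) i (a && b || b && c || a && c) := by
  funext j
  rcases eq_or_ne j i with rfl | hj
  · simp [bmed]
  · simp [bmed, hj]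

theorem bmed_update_not_update :
    bmed x (update y i !(x i)) (update y i (x i)) = update y i (x i) := by
  funext j
  rcases eq_or_ne j i with rfl | hj
  · cases hx : x j <;> simp [bmed, hx]
  · cases hx : x j <;> cases hy : y j <;> simp [bmed, hj, hx, hy]

theorem bmed_update_update_self (b : Bool) :
    bmed (update x i b) (update y i b) x = update x i b := by
  funext j
  rcases eq_or_ne j i with rfl | hj
  · cases b <;> simp [bmed]
  · cases hx : x j <;> cases hy : y j <;> simp [bmed, hj, hx, hy]

end Cube

namespace IsMedianAlgebra

variable {X : Type*} {m : X → X → X → X}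

theorem swap_left (hm : IsMedianAlgebra m) (a b c : X) : m a b c = m b a c := hm.1 a b c

theorem rotate (hm : IsMedianAlgebra m) (a b c : X) : m a b c = m b c a := hm.2.1 a b c

theorem self_left (hm : IsMedianAlgebra m) (a b : X) : m a a b = a := hm.2.2.1 a b

theorem self_right (hm : IsMedianAlgebra m) (a b : X) : m a b b = b := by
  rw [hm.rotate, hm.self_left]

theorem self_outer (hm : IsMedianAlgebra m) (a b : X) : m a b a = a := by
  rw [hm.swap_left, hm.self_right]

theorem distrib (hm : IsMedianAlgebra m) (a b c d e : X) :
    m a b (m c d e) = m (m a b c) (m a b d) e :=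
  hm.2.2.2 a b c d e

theorem median_mem_mInterval (hm : IsMedianAlgebra m) (a b c : X) : m a b c ∈ mInterval m a b := by
  change m a b (m a b c) = m a b c
  rw [hm.distrib, hm.self_outer, hm.self_right]

theorem median_assoc (hm : IsMedianAlgebra m) (c p q s : X) :
    m (m p q c) s c = m p (m q s c) c := by
  calc m (m p q c) s c = m s c (m q c p) := by rw [hm.rotate, hm.rotate p, hm.rotate]
    _ = m (m s c q) c p := by rw [hm.distrib, hm.self_right]
    _ = m p (m q s c) c := by rw [hm.rotate, hm.rotate, hm.swap_left, hm.rotate q, hm.swap_left]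

/-- The meet semilattice on `X` based at `c`, with meet `p ⊓ q = m p q c` and least element `c`. -/
abbrev semilatticeInf (hm : IsMedianAlgebra m) (c : X) : SemilatticeInf X :=
  letI : Min X := ⟨fun p q => m p q c⟩
  SemilatticeInf.mk' (fun p q => hm.swap_left p q c) (hm.median_assoc c) (fun p => hm.self_left p c)

theorem median_inf_right (hm : IsMedianAlgebra m) (c a b p q : X) :
    letI := hm.semilatticeInf c
    m a b (p ⊓ q) = m a b p ⊓ m a b q :=
  hm.distrib a b p q c

theorem median_inf_left (hm : IsMedianAlgebra m) (c a b p q : X) :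
    letI := hm.semilatticeInf c
    m (p ⊓ q) a b = m p a b ⊓ m q a b := by
  rw [hm.rotate, hm.median_inf_right, ← hm.rotate p, ← hm.rotate q]

theorem median_inf_middle (hm : IsMedianAlgebra m) (c a b p q : X) :
    letI := hm.semilatticeInf c
    m a (p ⊓ q) b = m a p b ⊓ m a q b := by
  rw [hm.swap_left, hm.median_inf_left, hm.swap_left p, hm.swap_left q]

end IsMedianAlgebra

namespace MConvex

variable {X : Type*} {m : X → X → X → X} {C : Set X}

theorem median_mem (hC : MConvex m C) (hm : IsMedianAlgebra m) {a b : X} (ha : a ∈ C) (hb : b ∈ C)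
    (c : X) : m a b c ∈ C :=
  hC a ha b hb (hm.median_mem_mInterval a b c)

protected theorem closure [TopologicalSpace X] (hC : MConvex m C) (hm : IsMedianAlgebra m)
    (hcont : ∀ b c, Continuous fun a => m a b c) : MConvex m (closure C) := by
  have median_mem_of_left {a b : X} (ha : a ∈ closure C) (hb : b ∈ C) (c : X) :
      m a b c ∈ closure C :=
    map_mem_closure (f := (m · b c)) (hcont b c) ha fun a' ha' => hC.median_mem hm ha' hb c
  intro a ha b hb c hc
  have hmaps : Set.MapsTo (m · a c) C (closure C) := fun b' hb' =>
    (hm.swap_left a b' c).subst (median_mem_of_left ha hb' c)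
  have hmem : m b a c ∈ closure (closure C) :=
    map_mem_closure (f := (m · a c)) (hcont a c) hb hmaps
  rwa [closure_closure, hm.swap_left, show m a b c = c from hc] at hmem

end MConvex

theorem nonempty_inter_of_isClosed {X : Type*} [TopologicalSpace X] [PreconnectedSpace X]
    {s t : Set X} (hs : IsClosed s) (ht : IsClosed t) (hst : s ∪ t = Set.univ) (hs' : s.Nonempty)
    (ht' : t.Nonempty) : (s ∩ t).Nonempty := by
  simpa using isPreconnected_closed_iff.mp isPreconnected_univ s t hs ht hst.symm.subset
    (by simpa using hs') (by simpa using ht')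

/-- A homomorphism of median algebras, from `(A, n)` to `(X, m)`. -/
def IsMedianHom {A X : Type*} (n : A → A → A → A) (m : X → X → X → X) (f : A → X) : Prop :=
  ∀ x y z, f (n x y z) = m (f x) (f y) (f z)

section CubeInMedianAlgebra

variable {X : Type*} {m : X → X → X → X} {r : ℕ} {f : (Fin r → Bool) → X} {i : Fin r}

theorem IsMedianHom.notMem_of_parallel_edge (hf : IsMedianHom bmed m f) (hm : IsMedianAlgebra m)
    {C : Set X} (hC : MConvex m C) {x y : Fin r → Bool} {b : Bool} (hy : f (update y i b) ∉ C)
    (hy' : f (update y i !b) ∈ C) (hxb : x i = b) : f x ∉ C := by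
  subst hxb
  intro hx
  apply hy
  rw [← bmed_update_not_update x y i, hf]
  exact hC.median_mem hm hx hy' _

theorem IsMedianHom.injective_of_face (hf : IsMedianHom bmed m f) (hm : IsMedianAlgebra m)
    (hface : Set.InjOn f {t | t i = false}) (hsep : ∀ x y, f x = f y → x i = y i) :
    Injective f := by
  intro x y hxy
  have hproj : update x i false = update y i false := by
    refine hface (by simp) (by simp) ?_
    calc f (update x i false) = m (f (update x i false)) (f (update y i false)) (f x) := by
          rw [← hf, bmed_update_update_self]
      _ = m (f (update y i false)) (f (update x i false)) (f y) := by rw [hm.swap_left, hxy]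
      _ = f (update y i false) := by rw [← hf, bmed_update_update_self]
  calc x = update (update x i false) i (x i) := by simp
    _ = update (update y i false) i (y i) := by rw [hproj, hsep x y hxy]
    _ = y := by simp

/-- The cube `f` with its face `t i = true` pushed towards `c` along the edges in direction `i`:
each vertex becomes the projection of `c` to the interval between `f (update t i false)` and `f t`,
a single point when `t i = false`. -/
def pushFace (m : X → X → X → X) (f : (Fin r → Bool) → X) (i : Fin r) (c : X)
    (t : Fin r → Bool) : X :=
  m (f (update t i false)) (f t) c

theorem pushFace_of_eq_false (hm : IsMedianAlgebra m) (c : X) {t : Fin r → Bool}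
    (ht : t i = false) : pushFace m f i c t = f t := by
  rw [pushFace, ← ht, update_eq_self, hm.self_left]

theorem isMedianHom_pushFace (hm : IsMedianAlgebra m) (hf : IsMedianHom bmed m f) (i : Fin r)
    (c : X) : IsMedianHom bmed m (pushFace m f i c) := by
  intro x y z
  let _ := hm.semilatticeInf c
  have hpush (t) : pushFace m f i c t = f (update t i false) ⊓ f (update t i (t i)) := by
    rw [update_eq_self]
    rfl
  have hbmed : bmed x y z i = (x i && y i || y i && z i || x i && z i) := rfl
  simp only [hpush, hm.median_inf_left, hm.median_inf_middle, hm.median_inf_right, ← hf _ _ _,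
    bmed_update, hbmed]
  cases x i <;> cases y i <;> cases z i <;> simp

theorem pushFace_mem_inter (hm : IsMedianAlgebra m) {C D : Set X} (hC : MConvex m C)
    (hD : MConvex m D) {c : X} (hc : c ∈ C ∩ D) {t : Fin r → Bool}
    (htC : f (update t i false) ∈ C) (htD : f t ∈ D) : pushFace m f i c t ∈ C ∩ D := by
  constructor
  · rw [pushFace, ← hm.rotate]
    exact hC.median_mem hm hc.1 htC _
  · rw [pushFace, hm.rotate]
    exact hD.median_mem hm htD hc.2 _

theorem exists_cube_pushed_into_inter (hm : IsMedianAlgebra m) (hfinj : Injective f)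
    (hf : IsMedianHom bmed m f) {C D : Set X} (hC : MConvex m C) (hD : MConvex m D)
    (hcover : C ∪ D = Set.univ) (hCD : (C ∩ D).Nonempty) {y : Fin r → Bool}
    (hyD : f (update y i false) ∉ D) (hyC : f (update y i true) ∉ C) :
    ∃ g : (Fin r → Bool) → X, Injective g ∧ IsMedianHom bmed m g ∧
      (∀ t, t i = false → g t = f t) ∧ (∀ t, t i = true → g t ∈ C ∩ D) := by
  obtain ⟨c, hc⟩ := hCD
  have hmem (a) : a ∈ C ∨ a ∈ D := Set.eq_univ_iff_forall.mp hcover a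
  have hbot (t) (ht : t i = false) : f t ∉ D :=
    hf.notMem_of_parallel_edge hm hD hyD ((hmem _).resolve_left hyC) ht
  have htop (t) (ht : t i = true) : f t ∉ C :=
    hf.notMem_of_parallel_edge hm hC hyC ((hmem _).resolve_right hyD) ht
  have hg : IsMedianHom bmed m (pushFace m f i c) := isMedianHom_pushFace hm hf i c
  have hg₀ (t) (ht : t i = false) : pushFace m f i c t = f t := pushFace_of_eq_false hm c ht
  have hg₁ (t) (ht : t i = true) : pushFace m f i c t ∈ C ∩ D :=
    pushFace_mem_inter hm hC hD hc ((hmem _).resolve_right (hbot _ (by simp)))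
      ((hmem _).resolve_left (htop t ht))
  have hside (t) : pushFace m f i c t ∈ D ↔ t i = true := by
    cases ht : t i
    · simpa [hg₀ t ht] using hbot t ht
    · simpa using (hg₁ t ht).2
  refine ⟨pushFace m f i c, hg.injective_of_face hm (i := i) ?_ ?_, hg, hg₀, hg₁⟩
  · exact hfinj.injOn.congr fun t ht => (hg₀ t ht).symm
  · intro x z hxz
    rw [Bool.eq_iff_iff, ← hside, ← hside, hxz]

end CubeInMedianAlgebra

theorem cube_pushed_into_wall_boundary_general {X : Type*} [TopologicalSpace X]
    [PreconnectedSpace X] {m : X → X → X → X} (hm : IsMedianAlgebra m)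
    (hcont : ∀ b c, Continuous fun a => m a b c) {r : ℕ} {i : Fin r} {y : Fin r → Bool}
    {f : (Fin r → Bool) → X} (hfinj : Injective f) (hf : IsMedianHom bmed m f) {Hp Hm : Set X}
    (hHp : MConvex m Hp) (hHm : MConvex m Hm) (hcover : Hp ∪ Hm = Set.univ)
    (hsep₀ : f (update y i false) ∉ closure Hm) (hsep₁ : f (update y i true) ∉ closure Hp) :
    ∃ g : (Fin r → Bool) → X, Injective g ∧ IsMedianHom bmed m g ∧
      (∀ t, t i = false → g t = f t) ∧
      (∀ t, t i = true → g t ∈ closure Hp ∩ closure Hm) := by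
  have hcover' : closure Hp ∪ closure Hm = Set.univ := by
    rw [← closure_union, hcover, closure_univ]
  have hmem (a) : a ∈ closure Hp ∨ a ∈ closure Hm := Set.eq_univ_iff_forall.mp hcover' a
  have hboundary : (closure Hp ∩ closure Hm).Nonempty :=
    nonempty_inter_of_isClosed isClosed_closure isClosed_closure hcover'
      ⟨_, (hmem _).resolve_right hsep₀⟩ ⟨_, (hmem _).resolve_left hsep₁⟩
  exact exists_cube_pushed_into_inter hm hfinj hf (hHp.closure hm hcont) (hHm.closure hm hcont)
    hcover' hboundary hsep₀ hsep₁

/-- Pushing half of a median cube into the boundary `L(W)` of a wall `W` strongly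
separating two adjacent vertices of the cube. -/
theorem cube_pushed_into_wall_boundary {X : Type*} [MetricSpace X] [ConnectedSpace X]
    (m : X → X → X → X) (hmed : IsMedianAlgebra m)
    (hcont : Continuous fun p : X × X × X => m p.1 p.2.1 p.2.2)
    (hlc : ∀ x : X, ∀ U ∈ nhds x, ∃ V ∈ nhds x, V ⊆ U ∧ MConvex m V)
    (r : ℕ) (hr : 0 < r) (f : (Fin r → Bool) → X)
    (hfinj : Function.Injective f)
    (hfmed : ∀ x y z, f (bmed x y z) = m (f x) (f y) (f z))
    (Hp Hm : Set X) (hW : IsWall m Hp Hm)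
    (hsepa : f (fun _ => false) ∉ closure Hm)
    (hsepb : f (Function.update (fun _ => false) ⟨0, hr⟩ true) ∉ closure Hp) :
    ∃ g : (Fin r → Bool) → X, Function.Injective g ∧
      (∀ x y z, g (bmed x y z) = m (g x) (g y) (g z)) ∧
      (∀ t, t ⟨0, hr⟩ = false → g t = f t) ∧
      (∀ t, t ⟨0, hr⟩ = true → g t ∈ closure Hp ∩ closure Hm) := by
  obtain ⟨-, -, hHp, hHm, -, hcover⟩ := hW
  exact cube_pushed_into_wall_boundary_general hmed
    (fun b c => hcont.comp (by fun_prop : Continuous fun a : X => (a, b, c)))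
    hfinj hfmed hHp hHm hcover (by rwa [update_eq_self_iff.mpr rfl]) hsepb
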